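/- Let D = {(q₁,q₂) ∈ ℂ² : F_{(q₁,q₂)} is degenerate} ⊆ ℂ² ≅ ℝ⁴ be the discriminant locus of the Fermat cubic. Then D is a compact and connected subset of ℝ⁴. -/

import Mathlib

/-!
The discriminant of a binary cubic is the resultant of its two polarised quadratics; for the fibre
cubics it gives two real equations in `q`. The first one bounds `|q|`, whence compactness.

Write `q₁³ = ρ³ (C + i S)` and `q₂³ = ρ³ σ³ (c + i s)`, where `ρ = |q|`, `|q₁| = ρ p`,
`|q₂| = ρ σ` and `c² + s² = 1`, and let `ch`, `sh` be the hyperbolic cosine and sine of `log ρ³`.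
The two equations become `ch + C = σ² r` and `sh s = S c`, where `r` depends on `p` and `s` only, so
that `(sh, S) = k (c, s)` for some `k`. Then `C² + S² = p⁶` and `ch² - sh² = 1` determine `ch`, `C`
and `k²` in terms of `p`, `σ` and `s`, which parametrizes the cubes of `q₁` and `q₂` explicitly.

For fixed `p` the value of `k²` grows as `|s|` shrinks, so its square root survives while `s` is
moved to `0`; lifting the cube roots joins every point of the locus to its part `s = 0`. That part
is a union of arcs from a point `(0, ζ)`, `ζ⁶ = 1`, to a point `(-ω, 0)`, `ω³ = 1`, and every such
pair of points is joined by an arc, so it is path connected.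
-/

open Complex MvPolynomial

/-- The restriction of the Fermat cubic to the twistor fibre over `q = q₁ + q₂·j`,
as a homogeneous binary cubic in `ℂ[λ₁, λ₂]`. -/
noncomputable def fermatFibrePoly (q₁ q₂ : ℂ) : MvPolynomial (Fin 2) ℂ :=
  (C q₁ * X 0 - C ((starRingEnd ℂ) q₂) * X 1) ^ 3
    + (C q₂ * X 0 + C ((starRingEnd ℂ) q₁) * X 1) ^ 3 + X 0 ^ 3 + X 1 ^ 3

/-- The discriminant locus of the Fermat cubic, as a subset of `ℂ² ≅ ℝ⁴`: the points over
which the fibre cubic is degenerate (zero or not squarefree in `ℂ[λ₁,λ₂]`). -/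
noncomputable def fermatDiscriminantLocus : Set (ℂ × ℂ) :=
  {q | ¬ Squarefree (fermatFibrePoly q.1 q.2)}

open scoped ComplexConjugate

section ContinuousRoots

variable {X : Type*} [TopologicalSpace X]

lemma exists_continuous_sq_eq {g : X → ℝ} (hg : Continuous g) (hg_nonneg : ∀ x, 0 ≤ g x) {x₀ : X}
    {y : ℝ} (hy : y ^ 2 = g x₀) :
    ∃ f : X → ℝ, Continuous f ∧ f x₀ = y ∧ ∀ x, f x ^ 2 = g x := by
  rcases le_total 0 y with h | h
  · exact ⟨fun x ↦ √(g x), by fun_prop, by simp only [← hy, Real.sqrt_sq h],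
      fun x ↦ Real.sq_sqrt (hg_nonneg x)⟩
  · exact ⟨fun x ↦ -√(g x), by fun_prop,
      by simp only [← hy, Real.sqrt_sq_eq_abs, abs_of_nonpos h, neg_neg],
      fun x ↦ by rw [neg_sq, Real.sq_sqrt (hg_nonneg x)]⟩

lemma exists_continuous_pow_eq [SimplyConnectedSpace X] [LocallyPathConnectedSpace X] {g : X → ℂ}
    (hg : Continuous g) (hg_ne : ∀ x, g x ≠ 0) {n : ℕ} (hn : n ≠ 0) {x₀ : X} {z : ℂ}
    (hz : z ^ n = g x₀) : ∃ f : X → ℂ, Continuous f ∧ f x₀ = z ∧ ∀ x, f x ^ n = g x := by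
  obtain ⟨f, ⟨hf, hfg⟩, -⟩ := (isCoveringMapOn_npow (𝕜 := ℂ) n
    (Nat.cast_ne_zero.2 hn)).existsUnique_continuousMap_lifts ⟨g, hg⟩ hz hg_ne
  exact ⟨f, f.continuous, hf, congrFun hfg⟩

end ContinuousRoots

section Powers

lemma exists_eq_mul_of_pow_eq_pow {K : Type*} [Field K] {n : ℕ} (hn : n ≠ 0) {x y : K}
    (h : x ^ n = y ^ n) : ∃ ω : K, ω ^ n = 1 ∧ x = ω * y := by
  rcases eq_or_ne y 0 with rfl | hy
  · exact ⟨1, one_pow n, by simpa [hn] using h⟩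
  · exact ⟨x / y, by rw [div_pow, h, div_self (pow_ne_zero n hy)], (div_mul_cancel₀ x hy).symm⟩

lemma pow_eq_mk_cos_sin_arg {ρ : ℝ} (hρ : ρ ≠ 0) (z : ℂ) (n : ℕ) :
    z ^ n = ⟨ρ ^ n * ((‖z‖ / ρ) ^ n * Real.cos (arg (z ^ n))),
      ρ ^ n * ((‖z‖ / ρ) ^ n * Real.sin (arg (z ^ n)))⟩ := by
  have hcancel : ρ ^ n * (‖z‖ / ρ) ^ n = ‖z ^ n‖ := by
    rw [← mul_pow, mul_div_cancel₀ _ hρ, norm_pow]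
  rw [← mul_assoc, ← mul_assoc, hcancel]
  exact Complex.ext (norm_mul_cos_arg _).symm (norm_mul_sin_arg _).symm

lemma norm_eq_mul_of_cube {z z' : ℂ} {ρ t : ℝ} (hρ : 0 ≤ ρ) (ht : 0 ≤ t)
    (hz : z ^ 3 = (ρ ^ 3 : ℝ) * z') (hz' : normSq z' = t ^ 6) : ‖z‖ = ρ * t := by
  refine (pow_left_inj₀ (norm_nonneg z) (by positivity) (n := 6) (by norm_num)).1 ?_
  calc ‖z‖ ^ 6 = normSq (z ^ 3) := by rw [normSq_eq_norm_sq, norm_pow, ← pow_mul]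
    _ = (ρ * t) ^ 6 := by
      rw [hz, normSq_mul, hz', normSq_ofReal]
      ring

end Powers

section BinaryCubic

variable {K : Type*} [Field K]

lemma exists_ne_zero_eval_eq_zero_of_not_isUnit {σ : Type*} [Finite σ] [Nontrivial σ]
    [IsAlgClosed K] {p : MvPolynomial σ K} (hp : ¬ IsUnit p) : ∃ v ≠ 0, eval v p = 0 := by
  by_contra! h_no_zero
  have dvd_X_pow (i : σ) : ∃ n, p ∣ X i ^ n := by
    have hX : X i ∈ vanishingIdeal K (zeroLocus K (Ideal.span {p})) := by
      refine mem_vanishingIdeal_iff.2 fun v hv ↦ ?_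
      have hpv : eval v p = 0 := by
        simpa [aeval_eq_eval] using mem_zeroLocus_iff.1 hv p (Ideal.subset_span rfl)
      have hv0 : v = 0 := by_contra fun hne ↦ h_no_zero v hne hpv
      simp [hv0]
    rw [vanishingIdeal_zeroLocus_eq_radical] at hX
    exact hX.imp fun n hn ↦ Ideal.mem_span_singleton.1 hn
  obtain ⟨i, j, hij⟩ := exists_pair_ne σ
  obtain ⟨m, hm⟩ := dvd_X_pow i
  obtain ⟨n, hn⟩ := dvd_X_pow j
  obtain ⟨k, -, hpk⟩ := (dvd_prime_pow X_prime m).1 hm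
  rcases k.eq_zero_or_pos with rfl | hk
  · exact hp (hpk.symm.isUnit (by simp))
  · have hXX : (X i : MvPolynomial σ K) ∣ X j :=
      X_prime.dvd_of_dvd_pow ((dvd_pow_self _ hk.ne').trans (hpk.symm.dvd.trans hn))
    exact hij (by simpa [X_dvd_X] using hXX)

lemma exists_common_zero_pderiv_of_not_squarefree {σ : Type*} [Finite σ] [Nontrivial σ]
    [IsAlgClosed K] {p : MvPolynomial σ K} (hp : ¬ Squarefree p) :
    ∃ v ≠ 0, ∀ i, eval v (pderiv i p) = 0 := by
  simp only [Squarefree, not_forall] at hp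
  obtain ⟨f, ⟨g, rfl⟩, hf⟩ := hp
  obtain ⟨v, hv, hfv⟩ := exists_ne_zero_eval_eq_zero_of_not_isUnit hf
  exact ⟨v, hv, fun i ↦ by simp [hfv]⟩

/-- The binary cubic form `a X³ + 3 b X² Y + 3 c X Y² + d Y³`, in the variables `X 0` and `X 1`.
The binomial coefficients make its partial derivatives three times the polarised quadratics
`(a, b, c)` and `(b, c, d)`. -/
noncomputable def binaryCubic (a b c d : K) : MvPolynomial (Fin 2) K :=
  C a * X 0 ^ 3 + 3 * C b * X 0 ^ 2 * X 1 + 3 * C c * X 0 * X 1 ^ 2 + C d * X 1 ^ 3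

lemma eval_pderiv_zero_binaryCubic {a b c d : K} (v : Fin 2 → K) :
    eval v (pderiv 0 (binaryCubic a b c d)) =
      3 * (a * v 0 ^ 2 + 2 * b * v 0 * v 1 + c * v 1 ^ 2) := by
  have h3 : pderiv 0 (3 : MvPolynomial (Fin 2) K) = 0 := (pderiv 0).map_natCast 3
  simp only [binaryCubic, Derivation.leibniz, Derivation.leibniz_pow, derivation_C, pderiv_X_self,
    pderiv_X_of_ne one_ne_zero, h3, smul_eq_mul, nsmul_eq_mul, map_add, map_mul, map_pow, map_zero,
    map_one, Nat.cast_ofNat, eval_ofNat, eval_C, eval_X]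
  ring

lemma eval_pderiv_one_binaryCubic {a b c d : K} (v : Fin 2 → K) :
    eval v (pderiv 1 (binaryCubic a b c d)) =
      3 * (b * v 0 ^ 2 + 2 * c * v 0 * v 1 + d * v 1 ^ 2) := by
  have h3 : pderiv 1 (3 : MvPolynomial (Fin 2) K) = 0 := (pderiv 1).map_natCast 3
  simp only [binaryCubic, Derivation.leibniz, Derivation.leibniz_pow, derivation_C, pderiv_X_self,
    pderiv_X_of_ne zero_ne_one, h3, smul_eq_mul, nsmul_eq_mul, map_add, map_mul, map_pow, map_zero,
    map_one, Nat.cast_ofNat, eval_ofNat, eval_C, eval_X]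
  ring

/-- The discriminant of `binaryCubic a b c d`, normalised as the resultant of the quadratics
`(a, b, c)` and `(b, c, d)`; it is `-1 / 27` times the usual one. -/
def cubicDisc (a b c d : K) : K :=
  (a * d - b * c) ^ 2 - 4 * (a * c - b ^ 2) * (b * d - c ^ 2)

lemma cubicDisc_eq_zero_of_common_zero {a b c d x y : K} (hxy : x ≠ 0 ∨ y ≠ 0)
    (h₁ : a * x ^ 2 + 2 * b * x * y + c * y ^ 2 = 0)
    (h₂ : b * x ^ 2 + 2 * c * x * y + d * y ^ 2 = 0) : cubicDisc a b c d = 0 := by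
  have hx : x ^ 3 * cubicDisc a b c d = 0 := by
    unfold cubicDisc
    grobner
  have hy : y ^ 3 * cubicDisc a b c d = 0 := by
    unfold cubicDisc
    grobner
  rcases hxy with h | h
  · simpa [h] using hx
  · simpa [h] using hy

lemma exists_common_zero_of_cubicDisc_eq_zero (h2 : (2 : K) ≠ 0) {a b c d : K}
    (h : cubicDisc a b c d = 0) : ∃ x y : K, (x ≠ 0 ∨ y ≠ 0) ∧
      a * x ^ 2 + 2 * b * x * y + c * y ^ 2 = 0 ∧ b * x ^ 2 + 2 * c * x * y + d * y ^ 2 = 0 := by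
  unfold cubicDisc at h
  by_cases hxx : a * c - b ^ 2 = 0
  · by_cases hyy : b * d - c ^ 2 = 0
    · have hxy : a * d - b * c = 0 := by simpa [hxx] using h
      by_cases ha : a = 0
      · obtain rfl : b = 0 := by simpa [ha] using hxx
        obtain rfl : c = 0 := by simpa using hyy
        exact ⟨1, 0, by simp [ha]⟩
      · exact ⟨-b, a, .inr ha, by linear_combination a * hxx, by
          linear_combination a * hxy - b * hxx⟩
    · exact ⟨2 * (b * d - c ^ 2), -(a * d - b * c), .inl (mul_ne_zero h2 hyy),
        by linear_combination c * h, by linear_combination d * h⟩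
  · exact ⟨-(a * d - b * c), 2 * (a * c - b ^ 2), .inr (mul_ne_zero h2 hxx),
      by linear_combination a * h, by linear_combination b * h⟩

lemma not_squarefree_binaryCubic_of_common_zero {a b c d x y : K} (hxy : x ≠ 0 ∨ y ≠ 0)
    (h₁ : a * x ^ 2 + 2 * b * x * y + c * y ^ 2 = 0)
    (h₂ : b * x ^ 2 + 2 * c * x * y + d * y ^ 2 = 0) : ¬ Squarefree (binaryCubic a b c d) := by
  set ℓ : MvPolynomial (Fin 2) K := C x * X 1 - C y * X 0 with hℓ
  have isUnit_C_cube {t : K} (ht : t ≠ 0) : IsUnit (C t ^ 3 : MvPolynomial (Fin 2) K) :=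
    ((isUnit_iff_ne_zero.2 ht).map C).pow 3
  have h₁' := congr(C (σ := Fin 2) $h₁)
  have h₂' := congr(C (σ := Fin 2) $h₂)
  simp only [map_add, map_mul, map_pow, map_zero, map_ofNat] at h₁' h₂'
  have sq_dvd : ℓ * ℓ ∣ binaryCubic a b c d := by
    rcases hxy with h | h
    · refine (isUnit_C_cube h).dvd_mul_left.1
        ⟨3 * (C c * C x + C d * C y) * X 0 + C d * ℓ, ?_⟩
      rw [binaryCubic]
      linear_combination X 0 ^ 3 * C x * h₁' + (X 0 ^ 3 * C y + 3 * X 0 ^ 2 * ℓ) * h₂'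
    · refine (isUnit_C_cube h).dvd_mul_left.1
        ⟨3 * (C a * C x + C b * C y) * X 1 - C a * ℓ, ?_⟩
      rw [binaryCubic]
      linear_combination (X 1 ^ 3 * C x - 3 * X 1 ^ 2 * ℓ) * h₁' + X 1 ^ 3 * C y * h₂'
  intro hsq
  have hunit : IsUnit (eval ![x, y] ℓ) := (hsq ℓ sq_dvd).map _
  simp [hℓ, mul_comm] at hunit

theorem not_squarefree_binaryCubic_iff [IsAlgClosed K] (h2 : (2 : K) ≠ 0) (h3 : (3 : K) ≠ 0)
    {a b c d : K} : ¬ Squarefree (binaryCubic a b c d) ↔ cubicDisc a b c d = 0 := by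
  refine ⟨fun h ↦ ?_, fun h ↦ ?_⟩
  · obtain ⟨v, hv, hpderiv⟩ := exists_common_zero_pderiv_of_not_squarefree h
    have hv' : v 0 ≠ 0 ∨ v 1 ≠ 0 := by
      simpa [funext_iff, Fin.forall_fin_two, imp_iff_not_or] using hv
    have h₀ := (eval_pderiv_zero_binaryCubic v).symm.trans (hpderiv 0)
    have h₁ := (eval_pderiv_one_binaryCubic v).symm.trans (hpderiv 1)
    exact cubicDisc_eq_zero_of_common_zero hv' ((mul_eq_zero.1 h₀).resolve_left h3)
      ((mul_eq_zero.1 h₁).resolve_left h3)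
  · obtain ⟨x, y, hxy, h₁, h₂⟩ := exists_common_zero_of_cubicDisc_eq_zero h2 h
    exact not_squarefree_binaryCubic_of_common_zero hxy h₁ h₂

end BinaryCubic

namespace FermatTwistor

lemma fermatFibrePoly_eq_binaryCubic (q₁ q₂ : ℂ) :
    fermatFibrePoly q₁ q₂ = binaryCubic (q₁ ^ 3 + q₂ ^ 3 + 1)
      (-(q₁ ^ 2 * conj q₂) + q₂ ^ 2 * conj q₁) (q₁ * conj q₂ ^ 2 + q₂ * conj q₁ ^ 2)
      (-conj q₂ ^ 3 + conj q₁ ^ 3 + 1) := by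
  simp only [fermatFibrePoly, binaryCubic, map_add, map_neg, map_mul, map_pow, map_one]
  ring

lemma cubicDisc_fibre {K : Type*} [Field K] (x x' y y' : K) :
    cubicDisc (x ^ 3 + y ^ 3 + 1) (-(x ^ 2 * y') + y ^ 2 * x') (x * y' ^ 2 + y * x' ^ 2)
        (-y' ^ 3 + x' ^ 3 + 1) =
      ((x * x' + y * y') ^ 3 + 1 + (x ^ 3 + x' ^ 3)) ^ 2 + (y ^ 3 - y' ^ 3) ^ 2
        - 4 * ((y * y') ^ 2 * (y * y' + 3 * (x * x')))
        + 2 * ((x ^ 3 - x' ^ 3) * (y ^ 3 + y' ^ 3)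
          - ((x * x' + y * y') ^ 3 - 1) * (y ^ 3 - y' ^ 3)) := by
  unfold cubicDisc
  ring

theorem mem_fermatDiscriminantLocus_iff {q : ℂ × ℂ} : q ∈ fermatDiscriminantLocus ↔
    ((‖q.1‖ ^ 2 + ‖q.2‖ ^ 2) ^ 3 + 1 + 2 * (q.1 ^ 3).re) ^ 2 =
        4 * (‖q.2‖ ^ 4 * (‖q.2‖ ^ 2 + 3 * ‖q.1‖ ^ 2) + (q.2 ^ 3).im ^ 2) ∧
      ((‖q.1‖ ^ 2 + ‖q.2‖ ^ 2) ^ 3 - 1) * (q.2 ^ 3).im = 2 * (q.1 ^ 3).im * (q.2 ^ 3).re := by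
  obtain ⟨q₁, q₂⟩ := q
  set n := ‖q₁‖ ^ 2 + ‖q₂‖ ^ 2 with hn
  set A := (n ^ 3 + 1 + 2 * (q₁ ^ 3).re) ^ 2 -
    4 * (‖q₂‖ ^ 4 * (‖q₂‖ ^ 2 + 3 * ‖q₁‖ ^ 2) + (q₂ ^ 3).im ^ 2) with hA
  set B := 2 * (q₁ ^ 3).im * (q₂ ^ 3).re - (n ^ 3 - 1) * (q₂ ^ 3).im with hB
  have disc_eq : cubicDisc (q₁ ^ 3 + q₂ ^ 3 + 1) (-(q₁ ^ 2 * conj q₂) + q₂ ^ 2 * conj q₁)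
      (q₁ * conj q₂ ^ 2 + q₂ * conj q₁ ^ 2) (-conj q₂ ^ 3 + conj q₁ ^ 3 + 1) =
      A + (4 * B : ℝ) * I := by
    rw [cubicDisc_fibre, mul_conj', mul_conj']
    simp only [← map_pow conj, add_conj, sub_conj]
    push_cast [hA, hB, hn]
    linear_combination 4 * ((q₂ ^ 3).im : ℂ) ^ 2 * I_sq
  calc (q₁, q₂) ∈ fermatDiscriminantLocus
      ↔ (A + (4 * B : ℝ) * I : ℂ) = 0 := by
        rw [← disc_eq, ← not_squarefree_binaryCubic_iff two_ne_zero three_ne_zero,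
          ← fermatFibrePoly_eq_binaryCubic]
        rfl
    _ ↔ A = 0 ∧ B = 0 := by simp [Complex.ext_iff]
    _ ↔ _ := by
        rw [hA, hB, sub_eq_zero, sub_eq_zero, eq_comm (a := 2 * _ * _)]

lemma isClosed_fermatDiscriminantLocus : IsClosed fermatDiscriminantLocus := by
  have hD := Set.ext fun q ↦ mem_fermatDiscriminantLocus_iff (q := q)
  rw [hD]
  exact (isClosed_eq (by fun_prop) (by fun_prop)).inter (isClosed_eq (by fun_prop) (by fun_prop))

lemma norm_sq_add_norm_sq_le {q : ℂ × ℂ} (hq : q ∈ fermatDiscriminantLocus) :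
    ‖q.1‖ ^ 2 + ‖q.2‖ ^ 2 ≤ 4 := by
  have heq := (mem_fermatDiscriminantLocus_iff.1 hq).1
  set a := ‖q.1‖ ^ 2 with ha
  set b := ‖q.2‖ ^ 2 with hb
  set t := √((a + b) ^ 3)
  have ha0 : 0 ≤ a := by positivity
  have hb0 : 0 ≤ b := by positivity
  have ht : t ^ 2 = (a + b) ^ 3 := Real.sq_sqrt (by positivity)
  have hre : -t ≤ (q.1 ^ 3).re := by
    refine (abs_le.1 ((abs_re_le_norm _).trans (Real.le_sqrt_of_sq_le ?_))).1
    rw [norm_pow, ← pow_mul, mul_comm, pow_mul, ← ha]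
    gcongr
    linarith
  have him : (q.2 ^ 3).im ^ 2 ≤ b ^ 3 := by
    rw [← sq_abs, hb, ← pow_mul, mul_comm 2, pow_mul, ← norm_pow]
    gcongr
    exact abs_im_le_norm _
  have hquartic : (t - 1) ^ 4 ≤ 8 * t ^ 2 := by
    have hnorm : ‖q.2‖ ^ 4 = b ^ 2 := by rw [hb]; ring
    calc (t - 1) ^ 4 = (t ^ 2 + 1 - 2 * t) ^ 2 := by ring
      _ ≤ ((a + b) ^ 3 + 1 + 2 * (q.1 ^ 3).re) ^ 2 := by
        rw [← ht]
        exact pow_le_pow_left₀ (by nlinarith [sq_nonneg (t - 1)]) (by linarith) 2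
      _ = 4 * (b ^ 2 * (b + 3 * a) + (q.2 ^ 3).im ^ 2) := by rw [heq, hnorm]
      _ ≤ 8 * (a + b) ^ 3 := by
        nlinarith [pow_nonneg ha0 3, mul_nonneg (sq_nonneg a) hb0, mul_nonneg ha0 (sq_nonneg b),
          pow_nonneg hb0 3]
      _ = 8 * t ^ 2 := by rw [ht]
  by_contra! hlt
  have ht8 : 8 < t := Real.lt_sqrt_of_sq_lt (by
    calc (8 : ℝ) ^ 2 = 4 ^ 3 := by norm_num
      _ < (a + b) ^ 3 := by gcongr)
  have hsq : 6 * t < (t - 1) ^ 2 := by nlinarith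
  nlinarith

theorem isCompact_fermatDiscriminantLocus : IsCompact fermatDiscriminantLocus := by
  refine Metric.isCompact_of_isClosed_isBounded isClosed_fermatDiscriminantLocus
    (isBounded_iff_forall_norm_le.2 ⟨2, fun q hq ↦ ?_⟩)
  have hle := norm_sq_add_norm_sq_le hq
  exact max_le (by nlinarith [sq_nonneg ‖q.2‖]) (by nlinarith [sq_nonneg ‖q.1‖])

/-- The auxiliary length `w = √(p² + σ² s²)` of the parametrization. -/
noncomputable def wLen (p σ s : ℝ) : ℝ := √(p ^ 2 + σ ^ 2 * s ^ 2)

/-- The auxiliary length `r = √(1 + p² + w²)` of the parametrization. -/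
noncomputable def rLen (p σ s : ℝ) : ℝ := √(1 + p ^ 2 + wLen p σ s ^ 2)

/-- The value of `k²` forced by `C² + S² = p⁶` when `C = σ² r s² - w³` and `S = k s`. -/
noncomputable def kSq (p σ s : ℝ) : ℝ :=
  σ ^ 2 * (p ^ 2 - (wLen p σ s * (rLen p σ s - wLen p σ s)) ^ 2)

/-- The value of `|q|³` at the parametrized point. -/
noncomputable def cubedRadius (p σ c s k : ℝ) : ℝ :=
  σ ^ 2 * rLen p σ s * c ^ 2 + wLen p σ s ^ 3 + k * c

/-- The value of `|q|` at the parametrized point. -/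
noncomputable def radius (p σ c s k : ℝ) : ℝ := cubedRadius p σ c s k ^ (3 : ℝ)⁻¹

/-- The value of `q₁³` at the parametrized point. -/
noncomputable def fstCube (p σ c s k : ℝ) : ℂ :=
  cubedRadius p σ c s k *
    ((σ ^ 2 * rLen p σ s * s ^ 2 - wLen p σ s ^ 3 : ℝ) + (k * s : ℝ) * I)

/-- The value of `q₂³` at the parametrized point. -/
noncomputable def sndCube (p σ c s k : ℝ) : ℂ :=
  cubedRadius p σ c s k * ((σ ^ 3 : ℝ) * (c + s * I))

/-- The parameter domain of the parametrization of the cubes of the coordinates of `q`: here `p`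
and `σ` are `|q₁| / |q|` and `|q₂| / |q|`, and `c + i s` is the direction of `q₂³`. -/
structure IsParameter (p σ c s k : ℝ) : Prop where
  p_nonneg : 0 ≤ p
  σ_nonneg : 0 ≤ σ
  p_sq_add_σ_sq : p ^ 2 + σ ^ 2 = 1
  c_sq_add_s_sq : c ^ 2 + s ^ 2 = 1
  k_sq : k ^ 2 = kSq p σ s

/-- The cubes of the coordinates of `q` are parametrized by `(p, σ, c, s, k)`. This determines `q`
up to multiplication of its coordinates by cube roots of unity. -/
structure IsParametrized (p σ c s k : ℝ) (q : ℂ × ℂ) : Prop extends IsParameter p σ c s k where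
  fst_cubed : q.1 ^ 3 = fstCube p σ c s k
  snd_cubed : q.2 ^ 3 = sndCube p σ c s k

section Lengths

variable {p σ c s s' : ℝ}

lemma wLen_nonneg : 0 ≤ wLen p σ s := Real.sqrt_nonneg _

lemma rLen_pos : 0 < rLen p σ s := Real.sqrt_pos.2 (by positivity)

lemma wLen_sq : wLen p σ s ^ 2 = p ^ 2 + σ ^ 2 * s ^ 2 := Real.sq_sqrt (by positivity)

lemma rLen_sq : rLen p σ s ^ 2 = 1 + p ^ 2 + wLen p σ s ^ 2 := Real.sq_sqrt (by positivity)

lemma sq_sub_kSq_mul_sq (hpσ : p ^ 2 + σ ^ 2 = 1) (hcs : c ^ 2 + s ^ 2 = 1) :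
    (σ ^ 2 * rLen p σ s * c ^ 2 + wLen p σ s ^ 3) ^ 2 - kSq p σ s * c ^ 2 = 1 := by
  have hw := wLen_sq (p := p) (σ := σ) (s := s)
  have hr := rLen_sq (p := p) (σ := σ) (s := s)
  unfold kSq
  grobner

lemma sq_add_kSq_mul_sq (hpσ : p ^ 2 + σ ^ 2 = 1) :
    (σ ^ 2 * rLen p σ s * s ^ 2 - wLen p σ s ^ 3) ^ 2 + kSq p σ s * s ^ 2 = p ^ 6 := by
  have hw := wLen_sq (p := p) (σ := σ) (s := s)
  have hr := rLen_sq (p := p) (σ := σ) (s := s)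
  unfold kSq
  grobner

lemma sq_mul_rLen_sq (hpσ : p ^ 2 + σ ^ 2 = 1) :
    (σ ^ 2 * rLen p σ s) ^ 2 = σ ^ 4 * (σ ^ 2 + 3 * p ^ 2) + σ ^ 6 * s ^ 2 := by
  rw [mul_pow, rLen_sq, wLen_sq]
  linear_combination -σ ^ 4 * hpσ

lemma sq_add_sq_mul_sub_eq_wLen_pow (hpσ : p ^ 2 + σ ^ 2 = 1) (hcs : c ^ 2 + s ^ 2 = 1) :
    s ^ 2 + c ^ 2 * p ^ 6 - (σ ^ 2 * rLen p σ s) ^ 2 * s ^ 2 * c ^ 2 = (wLen p σ s ^ 3) ^ 2 := by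
  have hw := wLen_sq (p := p) (σ := σ) (s := s)
  have hr := rLen_sq (p := p) (σ := σ) (s := s)
  grobner

lemma sq_mul_rLen_mul_sq_le_one (hpσ : p ^ 2 + σ ^ 2 = 1) (hcs : c ^ 2 + s ^ 2 = 1) :
    σ ^ 2 * rLen p σ s * c ^ 2 ≤ 1 := by
  set W := wLen p σ s ^ 2 with hW
  have hσc : σ ^ 2 * c ^ 2 = 1 - W := by
    rw [hW, wLen_sq]
    linear_combination σ ^ 2 * hcs + hpσ
  have hpW : p ^ 2 ≤ W := by
    rw [hW, wLen_sq]
    exact le_add_of_nonneg_right (by positivity)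
  have : 0 ≤ W := by positivity
  have hW1 : W ≤ 1 := by nlinarith [sq_nonneg (σ * c)]
  have hr : rLen p σ s ^ 2 ≤ 1 + 2 * W := by
    rw [rLen_sq]
    linarith
  refine (sq_le_one_iff₀ (by have := @rLen_pos p σ s; positivity)).1 ?_
  calc (σ ^ 2 * rLen p σ s * c ^ 2) ^ 2 = (1 - W) ^ 2 * rLen p σ s ^ 2 := by
        rw [← hσc]
        ring
    _ ≤ (1 - W) ^ 2 * (1 + 2 * W) := by gcongr
    _ ≤ 1 := by nlinarith [mul_nonneg (sq_nonneg W) (sub_nonneg.2 hW1)]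

lemma wLen_zero (hp : 0 ≤ p) : wLen p σ 0 = p := by simp [wLen, Real.sqrt_sq hp]

lemma kSq_zero_nonneg (hp : 0 ≤ p) (hp1 : p ≤ 1) : 0 ≤ kSq p σ 0 := by
  have hr : rLen p σ 0 ^ 2 = 1 + p ^ 2 + p ^ 2 := by rw [rLen_sq, wLen_zero hp]
  have hpr : p ≤ rLen p σ 0 := le_of_sq_le_sq (by linarith [sq_nonneg p]) rLen_pos.le
  have hrp : rLen p σ 0 - p ≤ 1 := by
    linarith [le_of_sq_le_sq (a := rLen p σ 0) (b := 1 + p) (by nlinarith) (by linarith)]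
  rw [kSq, wLen_zero hp]
  have := mul_le_of_le_one_right hp hrp
  have := mul_nonneg hp (sub_nonneg.2 hpr)
  refine mul_nonneg (sq_nonneg σ) (sub_nonneg.2 ?_)
  gcongr

lemma rLen_sub_wLen_pos : 0 < rLen p σ s - wLen p σ s :=
  sub_pos.2 (Real.lt_sqrt_of_sq_lt (by nlinarith [sq_nonneg p]))

-- Unlike the difference, the quotient is visibly increasing in `w / r`.
lemma wLen_mul_sub_eq_div : wLen p σ s * (rLen p σ s - wLen p σ s) =
    (1 + p ^ 2) * (wLen p σ s / (rLen p σ s + wLen p σ s)) := by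
  rw [← mul_div_assoc, eq_div_iff (add_pos_of_pos_of_nonneg rLen_pos wLen_nonneg).ne']
  linear_combination wLen p σ s * @rLen_sq p σ s

lemma wLen_le_wLen (h : |s| ≤ |s'|) : wLen p σ s ≤ wLen p σ s' := by
  have := sq_le_sq.2 h
  unfold wLen
  gcongr

lemma kSq_le_kSq (h : |s'| ≤ |s|) : kSq p σ s ≤ kSq p σ s' := by
  have hw := wLen_le_wLen (p := p) (σ := σ) h
  have hw₀ := @wLen_nonneg p σ s'
  have hr := @rLen_pos p σ s
  have hr' := @rLen_pos p σ s'
  have hcross : wLen p σ s' * rLen p σ s ≤ wLen p σ s * rLen p σ s' := by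
    refine (pow_le_pow_iff_left₀ (by positivity) (mul_nonneg wLen_nonneg hr'.le) two_ne_zero).1 ?_
    rw [mul_pow, mul_pow, rLen_sq, rLen_sq]
    have := pow_le_pow_left₀ hw₀ hw 2
    nlinarith [sq_nonneg p]
  have hle :
      wLen p σ s' * (rLen p σ s' - wLen p σ s') ≤ wLen p σ s * (rLen p σ s - wLen p σ s) := by
    rw [wLen_mul_sub_eq_div, wLen_mul_sub_eq_div]
    refine mul_le_mul_of_nonneg_left ?_ (by positivity)
    rw [div_le_div_iff₀ (by positivity) (by linarith)]
    linarith
  have hnonneg : 0 ≤ wLen p σ s' * (rLen p σ s' - wLen p σ s') :=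
    mul_nonneg hw₀ rLen_sub_wLen_pos.le
  unfold kSq
  gcongr

end Lengths

section Continuity

variable {X : Type*} [TopologicalSpace X] {p σ c s k : X → ℝ} (hp : Continuous p)
  (hσ : Continuous σ) (hs : Continuous s)
include hp hσ hs

lemma continuous_wLen : Continuous fun x ↦ wLen (p x) (σ x) (s x) := by
  unfold wLen
  fun_prop

lemma continuous_rLen : Continuous fun x ↦ rLen (p x) (σ x) (s x) := by
  have := continuous_wLen hp hσ hs
  unfold rLen
  fun_prop

lemma continuous_kSq : Continuous fun x ↦ kSq (p x) (σ x) (s x) := by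
  have := continuous_wLen hp hσ hs
  have := continuous_rLen hp hσ hs
  unfold kSq
  fun_prop

variable (hc : Continuous c) (hk : Continuous k)
include hc hk

lemma continuous_cubedRadius :
    Continuous fun x ↦ cubedRadius (p x) (σ x) (c x) (s x) (k x) := by
  have := continuous_wLen hp hσ hs
  have := continuous_rLen hp hσ hs
  unfold cubedRadius
  fun_prop

lemma continuous_fstCube : Continuous fun x ↦ fstCube (p x) (σ x) (c x) (s x) (k x) := by
  have := continuous_wLen hp hσ hs
  have := continuous_rLen hp hσ hs
  have := continuous_cubedRadius hp hσ hs hc hk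
  unfold fstCube
  fun_prop

lemma continuous_sndCube : Continuous fun x ↦ sndCube (p x) (σ x) (c x) (s x) (k x) := by
  have := continuous_cubedRadius hp hσ hs hc hk
  unfold sndCube
  fun_prop

end Continuity

/-- Polar coordinates of a nonzero `q`, adapted to cubes: `ρ = |q|`, the moduli of `q₁` and `q₂` are
`ρ p` and `ρ σ`, and their cubes are `ρ³ (C + i S)` and `ρ³ σ³ (c + i s)`. The radius is also
recorded by `ch + sh = ρ³`, where `ch` and `sh` are the hyperbolic cosine and sine of `log ρ³`. -/
structure PolarForm (q : ℂ × ℂ) where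
  (ρ p σ C S c s ch sh : ℝ)
  ρ_pos : 0 < ρ
  p_nonneg : 0 ≤ p
  σ_nonneg : 0 ≤ σ
  p_sq_add_σ_sq : p ^ 2 + σ ^ 2 = 1
  c_sq_add_s_sq : c ^ 2 + s ^ 2 = 1
  ch_add_sh : ch + sh = ρ ^ 3
  ch_sq_sub_sh_sq : ch ^ 2 - sh ^ 2 = 1
  norm_fst : ‖q.1‖ = ρ * p
  norm_snd : ‖q.2‖ = ρ * σ
  fst_cubed : q.1 ^ 3 = ⟨ρ ^ 3 * C, ρ ^ 3 * S⟩
  snd_cubed : q.2 ^ 3 = ⟨ρ ^ 3 * (σ ^ 3 * c), ρ ^ 3 * (σ ^ 3 * s)⟩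

namespace PolarForm

variable {q : ℂ × ℂ}

lemma nonempty_of_ne_zero (hq : q ≠ 0) : Nonempty (PolarForm q) := by
  set ρ := √(‖q.1‖ ^ 2 + ‖q.2‖ ^ 2)
  have norm_sq_pos : 0 < ‖q.1‖ ^ 2 + ‖q.2‖ ^ 2 := by
    by_contra! h
    exact hq (Prod.ext (norm_eq_zero.1 (by nlinarith [norm_nonneg q.1, sq_nonneg ‖q.2‖]))
      (norm_eq_zero.1 (by nlinarith [norm_nonneg q.2, sq_nonneg ‖q.1‖])))
  have hρ : 0 < ρ := Real.sqrt_pos.2 norm_sq_pos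
  have hρ_sq : ρ ^ 2 = ‖q.1‖ ^ 2 + ‖q.2‖ ^ 2 := Real.sq_sqrt norm_sq_pos.le
  exact ⟨{
    ρ, p := ‖q.1‖ / ρ, σ := ‖q.2‖ / ρ
    C := (‖q.1‖ / ρ) ^ 3 * Real.cos (arg (q.1 ^ 3))
    S := (‖q.1‖ / ρ) ^ 3 * Real.sin (arg (q.1 ^ 3))
    c := Real.cos (arg (q.2 ^ 3))
    s := Real.sin (arg (q.2 ^ 3))
    ch := (ρ ^ 3 + (ρ ^ 3)⁻¹) / 2
    sh := (ρ ^ 3 - (ρ ^ 3)⁻¹) / 2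
    ρ_pos := hρ
    p_nonneg := by positivity
    σ_nonneg := by positivity
    p_sq_add_σ_sq := by
      field_simp
      exact hρ_sq.symm
    c_sq_add_s_sq := Real.cos_sq_add_sin_sq _
    ch_add_sh := by ring
    ch_sq_sub_sh_sq := by
      field_simp
      ring
    norm_fst := by field_simp
    norm_snd := by field_simp
    fst_cubed := pow_eq_mk_cos_sin_arg hρ.ne' q.1 3
    snd_cubed := pow_eq_mk_cos_sin_arg hρ.ne' q.2 3 }⟩

variable (P : PolarForm q)
include P

lemma C_sq_add_S_sq : P.C ^ 2 + P.S ^ 2 = P.p ^ 6 := by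
  have hnorm : (P.ρ ^ 3) ^ 2 * (P.C ^ 2 + P.S ^ 2) = (P.ρ ^ 3) ^ 2 * P.p ^ 6 := by
    calc (P.ρ ^ 3) ^ 2 * (P.C ^ 2 + P.S ^ 2) = ‖q.1 ^ 3‖ ^ 2 := by
          rw [P.fst_cubed, ← normSq_eq_norm_sq, normSq_mk]
          ring
      _ = (P.ρ ^ 3) ^ 2 * P.p ^ 6 := by
          rw [norm_pow, P.norm_fst]
          ring
  exact mul_left_cancel₀ (pow_ne_zero 2 (pow_pos P.ρ_pos 3).ne') hnorm

lemma one_le_ch : 1 ≤ P.ch := by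
  have hsum : 0 < P.ch + P.sh := P.ch_add_sh ▸ pow_pos P.ρ_pos 3
  have hdiff : 0 < P.ch - P.sh :=
    pos_of_mul_pos_right (by linarith [P.ch_sq_sub_sh_sq, sq_sub_sq P.ch P.sh]) hsum.le
  nlinarith [P.ch_sq_sub_sh_sq, sq_nonneg P.sh]

lemma mem_iff : q ∈ fermatDiscriminantLocus ↔
    (P.ch + P.C) ^ 2 = (P.σ ^ 2 * rLen P.p P.σ P.s) ^ 2 ∧
      P.σ ^ 3 * (P.sh * P.s) = P.σ ^ 3 * (P.S * P.c) := by
  have hν : P.ρ ^ 3 ≠ 0 := (pow_pos P.ρ_pos 3).ne'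
  have hn : ((P.ρ * P.p) ^ 2 + (P.ρ * P.σ) ^ 2) ^ 3 = P.ρ ^ 3 * (P.ch + P.sh) := by
    rw [P.ch_add_sh, ← mul_one (P.ρ ^ 3 * P.ρ ^ 3), ← one_pow 3, ← P.p_sq_add_σ_sq]
    ring
  have hone : 1 = P.ρ ^ 3 * (P.ch - P.sh) := by
    rw [← P.ch_add_sh]
    linear_combination -P.ch_sq_sub_sh_sq
  have h₁ : P.ρ ^ 3 * (P.ch + P.sh) + 1 + 2 * (P.ρ ^ 3 * P.C) = 2 * P.ρ ^ 3 * (P.ch + P.C) := by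
    linear_combination hone
  have h₂ : P.ρ ^ 3 * (P.ch + P.sh) - 1 = 2 * P.ρ ^ 3 * P.sh := by linear_combination -hone
  rw [mem_fermatDiscriminantLocus_iff, P.norm_fst, P.norm_snd, hn, P.fst_cubed, P.snd_cubed, h₁, h₂,
    sq_mul_rLen_sq P.p_sq_add_σ_sq]
  refine and_congr ?_ ?_
  · rw [mul_pow, ← mul_right_inj' (pow_ne_zero 2 (mul_ne_zero two_ne_zero hν))
      (b := (P.ch + P.C) ^ 2)]
    ring_nf
  · rw [← mul_right_inj' (mul_ne_zero two_ne_zero (pow_ne_zero 2 hν))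
      (b := P.σ ^ 3 * (P.sh * P.s))]
    ring_nf

lemma ch_add_C_eq (hq : q ∈ fermatDiscriminantLocus) :
    P.ch + P.C = P.σ ^ 2 * rLen P.p P.σ P.s := by
  have hch := P.one_le_ch
  have hp : P.p ^ 2 ≤ 1 := by linarith [P.p_sq_add_σ_sq, sq_nonneg P.σ]
  have hC : P.C ^ 2 ≤ 1 := by
    calc P.C ^ 2 ≤ P.p ^ 6 := by linarith [P.C_sq_add_S_sq, sq_nonneg P.S]
      _ = (P.p ^ 2) ^ 3 := by ring
      _ ≤ 1 := pow_le_one₀ (by positivity) hp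
  refine (pow_left_inj₀ (by linarith [(abs_le.1 ((sq_le_one_iff_abs_le_one _).1 hC)).1]) ?_
    two_ne_zero).1 (P.mem_iff.1 hq).1
  have := @rLen_pos P.p P.σ P.s
  positivity

lemma sh_mul_s_eq (hq : q ∈ fermatDiscriminantLocus) : P.sh * P.s = P.S * P.c := by
  rcases eq_or_ne P.σ 0 with hσ | hσ
  · have hsum : P.ch + P.C = 0 := by simp [P.ch_add_C_eq hq, hσ]
    have hp : P.p ^ 6 = 1 := by
      have hp2 : P.p ^ 2 = 1 := by simpa [hσ] using P.p_sq_add_σ_sq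
      rw [show P.p ^ 6 = (P.p ^ 2) ^ 3 by ring, hp2, one_pow]
    have hsq : P.sh ^ 2 + P.S ^ 2 = 0 := by
      linear_combination P.C_sq_add_S_sq + hp - P.ch_sq_sub_sh_sq + (P.ch - P.C) * hsum
    have hS : P.S = 0 := by nlinarith [sq_nonneg P.sh, sq_nonneg P.S]
    have hsh : P.sh = 0 := by nlinarith [sq_nonneg P.sh, sq_nonneg P.S]
    simp [hS, hsh]
  · exact mul_left_cancel₀ (pow_ne_zero 3 hσ) (P.mem_iff.1 hq).2

lemma C_eq (hq : q ∈ fermatDiscriminantLocus) :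
    P.C = P.σ ^ 2 * rLen P.p P.σ P.s * P.s ^ 2 - wLen P.p P.σ P.s ^ 3 := by
  set w := wLen P.p P.σ P.s
  set M := P.σ ^ 2 * rLen P.p P.σ P.s
  have hch : P.ch + P.C = M := P.ch_add_C_eq hq
  have hsh : P.sh * P.s = P.S * P.c := P.sh_mul_s_eq hq
  have hsq : (P.C - M * P.s ^ 2) ^ 2 = (w ^ 3) ^ 2 := by
    calc (P.C - M * P.s ^ 2) ^ 2
        = P.s ^ 2 + P.c ^ 2 * P.p ^ 6 - M ^ 2 * P.s ^ 2 * P.c ^ 2 := by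
          linear_combination P.s ^ 2 * P.ch_sq_sub_sh_sq + P.c ^ 2 * P.C_sq_add_S_sq
            + (P.sh * P.s + P.S * P.c) * hsh - P.s ^ 2 * (P.ch - P.C + M) * hch
            + (M ^ 2 * P.s ^ 2 - P.C ^ 2) * P.c_sq_add_s_sq
      _ = (w ^ 3) ^ 2 :=
          sq_add_sq_mul_sub_eq_wLen_pow P.p_sq_add_σ_sq P.c_sq_add_s_sq
  rcases sq_eq_sq_iff_eq_or_eq_neg.1 hsq with h | h
  -- The other root would give `ch ≤ M c² - w³ ≤ 1`, against `1 ≤ ch`, unless `w = 0`.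
  · have hMc : M * P.c ^ 2 ≤ 1 := sq_mul_rLen_mul_sq_le_one P.p_sq_add_σ_sq P.c_sq_add_s_sq
    have hch_eq : P.ch = M * P.c ^ 2 - w ^ 3 := by
      linear_combination hch - h - M * P.c_sq_add_s_sq
    have hw0 : w ^ 3 = 0 :=
      le_antisymm (by linarith [P.one_le_ch]) (pow_nonneg wLen_nonneg 3)
    linear_combination h + 2 * hw0
  · linear_combination h

theorem isParametrized (hq : q ∈ fermatDiscriminantLocus) :
    IsParametrized P.p P.σ P.c P.s (P.sh * P.c + P.S * P.s) q := by
  set k := P.sh * P.c + P.S * P.s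
  have hsh : P.sh = k * P.c := by
    linear_combination -P.sh * P.c_sq_add_s_sq + P.s * P.sh_mul_s_eq hq
  have hS : P.S = k * P.s := by
    linear_combination -P.S * P.c_sq_add_s_sq - P.c * P.sh_mul_s_eq hq
  have hC := P.C_eq hq
  have hch : P.ch = P.σ ^ 2 * rLen P.p P.σ P.s * P.c ^ 2 + wLen P.p P.σ P.s ^ 3 := by
    linear_combination P.ch_add_C_eq hq - hC -
      P.σ ^ 2 * rLen P.p P.σ P.s * P.c_sq_add_s_sq
  have hk_sq : k ^ 2 = kSq P.p P.σ P.s := by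
    have hc := sq_sub_kSq_mul_sq (s := P.s) P.p_sq_add_σ_sq P.c_sq_add_s_sq
    have hs := sq_add_kSq_mul_sq (s := P.s) P.p_sq_add_σ_sq
    have hc' := P.ch_sq_sub_sh_sq
    have hs' := P.C_sq_add_S_sq
    rw [hch, hsh] at hc'
    rw [hC, hS] at hs'
    linear_combination (kSq P.p P.σ P.s - k ^ 2) * P.c_sq_add_s_sq + hs' - hs + hc - hc'
  have hν : cubedRadius P.p P.σ P.c P.s k = P.ρ ^ 3 := by
    rw [← P.ch_add_sh, hch, hsh]
    rfl
  refine ⟨⟨P.p_nonneg, P.σ_nonneg, P.p_sq_add_σ_sq, P.c_sq_add_s_sq, hk_sq⟩, ?_, ?_⟩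
  · rw [P.fst_cubed, fstCube, hν, ← hC, ← hS]
    apply Complex.ext <;> simp [-ofReal_pow]
  · rw [P.snd_cubed, sndCube, hν]
    apply Complex.ext <;> simp [-ofReal_pow]

end PolarForm

namespace IsParameter

variable {p σ c s k : ℝ} (h : IsParameter p σ c s k)
include h

lemma cubedRadius_pos : 0 < cubedRadius p σ c s k := by
  have hch := sq_sub_kSq_mul_sq (s := s) h.p_sq_add_σ_sq h.c_sq_add_s_sq
  have hlt : |k * c| < |σ ^ 2 * rLen p σ s * c ^ 2 + wLen p σ s ^ 3| := by
    rw [← sq_lt_sq, mul_pow, h.k_sq]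
    linarith
  have hch_nonneg : 0 ≤ σ ^ 2 * rLen p σ s * c ^ 2 + wLen p σ s ^ 3 := by
    have := @rLen_pos p σ s
    have := @wLen_nonneg p σ s
    positivity
  rw [abs_of_nonneg hch_nonneg] at hlt
  unfold cubedRadius
  linarith [neg_abs_le (k * c)]

lemma radius_pos : 0 < radius p σ c s k := Real.rpow_pos_of_pos h.cubedRadius_pos _

lemma radius_pow_three : radius p σ c s k ^ 3 = cubedRadius p σ c s k :=
  Real.rpow_inv_natCast_pow h.cubedRadius_pos.le three_ne_zero

lemma normSq_fst_direction :
    normSq ((σ ^ 2 * rLen p σ s * s ^ 2 - wLen p σ s ^ 3 : ℝ) + (k * s : ℝ) * I) = p ^ 6 := by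
  rw [normSq_add_mul_I, mul_pow, h.k_sq]
  exact sq_add_kSq_mul_sq h.p_sq_add_σ_sq

lemma normSq_snd_direction : normSq ((σ ^ 3 : ℝ) * (c + s * I)) = σ ^ 6 := by
  rw [normSq_mul, normSq_add_mul_I, h.c_sq_add_s_sq, normSq_ofReal]
  ring

lemma fstCube_ne_zero (hp : p ≠ 0) : fstCube p σ c s k ≠ 0 :=
  mul_ne_zero (ofReal_ne_zero.2 h.cubedRadius_pos.ne')
    (normSq_pos.1 (h.normSq_fst_direction ▸ by positivity))

lemma sndCube_ne_zero (hσ : σ ≠ 0) : sndCube p σ c s k ≠ 0 :=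
  mul_ne_zero (ofReal_ne_zero.2 h.cubedRadius_pos.ne')
    (normSq_pos.1 (h.normSq_snd_direction ▸ by positivity))

end IsParameter

namespace IsParametrized

variable {p σ c s k : ℝ} {q : ℂ × ℂ}

/-- The polar form of a parametrized point, read off from its parameters. -/
noncomputable def polarForm (h : IsParametrized p σ c s k q) : PolarForm q where
  ρ := radius p σ c s k
  p := p
  σ := σ
  C := σ ^ 2 * rLen p σ s * s ^ 2 - wLen p σ s ^ 3
  S := k * s
  c := c
  s := s
  ch := σ ^ 2 * rLen p σ s * c ^ 2 + wLen p σ s ^ 3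
  sh := k * c
  ρ_pos := h.radius_pos
  p_nonneg := h.p_nonneg
  σ_nonneg := h.σ_nonneg
  p_sq_add_σ_sq := h.p_sq_add_σ_sq
  c_sq_add_s_sq := h.c_sq_add_s_sq
  ch_add_sh := h.radius_pow_three.symm
  ch_sq_sub_sh_sq := by
    rw [mul_pow, h.k_sq]
    exact sq_sub_kSq_mul_sq h.p_sq_add_σ_sq h.c_sq_add_s_sq
  norm_fst := by
    refine norm_eq_mul_of_cube h.radius_pos.le h.p_nonneg ?_ h.normSq_fst_direction
    rw [h.fst_cubed, h.radius_pow_three, fstCube]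
  norm_snd := by
    refine norm_eq_mul_of_cube h.radius_pos.le h.σ_nonneg ?_ h.normSq_snd_direction
    rw [h.snd_cubed, h.radius_pow_three, sndCube]
  fst_cubed := by
    rw [h.fst_cubed, h.radius_pow_three, fstCube]
    apply Complex.ext <;> simp [-ofReal_pow]
  snd_cubed := by
    rw [h.snd_cubed, h.radius_pow_three, sndCube]
    apply Complex.ext <;> simp [-ofReal_pow]

theorem mem (h : IsParametrized p σ c s k q) : q ∈ fermatDiscriminantLocus := by
  refine h.polarForm.mem_iff.2 ⟨?_, ?_⟩
  · have hsum : h.polarForm.ch + h.polarForm.C = σ ^ 2 * rLen p σ s := by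
      simp only [polarForm]
      linear_combination σ ^ 2 * rLen p σ s * h.c_sq_add_s_sq
    rw [hsum]
    rfl
  · simp only [polarForm]
    ring

end IsParametrized

namespace IsParameter

variable {p σ c s k : ℝ}

-- `s * cos t` runs over `[-|s|, |s|]`, where `kSq` stays nonnegative, and vanishes at `t = π / 2`.
lemma exists_deformation (h : IsParameter p σ c s k) :
    ∃ c' k' : ℝ → ℝ, Continuous c' ∧ Continuous k' ∧ c' 0 = c ∧ k' 0 = k ∧
      ∀ t, IsParameter p σ (c' t) (s * Real.cos t) (k' t) := by
  have hs (t : ℝ) : |s * Real.cos t| ≤ |s| := by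
    rw [abs_mul]
    exact mul_le_of_le_one_right (abs_nonneg s) (Real.abs_cos_le_one t)
  have hc_nonneg (t : ℝ) : 0 ≤ 1 - (s * Real.cos t) ^ 2 := by
    linarith [sq_le_sq.2 (hs t), h.c_sq_add_s_sq, sq_nonneg c]
  have hk_nonneg (t : ℝ) : 0 ≤ kSq p σ (s * Real.cos t) :=
    ((sq_nonneg k).trans_eq h.k_sq).trans (kSq_le_kSq (hs t))
  obtain ⟨c', hc', hc'0, hc'_sq⟩ := exists_continuous_sq_eq (by fun_prop) hc_nonneg (x₀ := 0)
    (y := c) (by simpa using eq_sub_of_add_eq h.c_sq_add_s_sq)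
  obtain ⟨k', hk', hk'0, hk'_sq⟩ := exists_continuous_sq_eq
    (continuous_kSq continuous_const continuous_const (by fun_prop)) hk_nonneg (x₀ := 0)
    (y := k) (by simpa using h.k_sq)
  exact ⟨c', k', hc', hk', hc'0, hk'0, fun t ↦ ⟨h.p_nonneg, h.σ_nonneg, h.p_sq_add_σ_sq,
    by rw [hc'_sq, sub_add_cancel], hk'_sq t⟩⟩

lemma s_eq_zero (h : IsParameter 0 σ c s k) : s = 0 := by
  have hσ : σ ^ 2 = 1 := by simpa using h.p_sq_add_σ_sq
  have hw : wLen 0 σ s * (rLen 0 σ s - wLen 0 σ s) = 0 := by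
    have hk := h.k_sq
    rw [kSq, hσ] at hk
    refine sq_eq_zero_iff.1 (le_antisymm ?_ (sq_nonneg _))
    linarith [sq_nonneg k]
  have hw0 := (mul_eq_zero.1 hw).resolve_right rLen_sub_wLen_pos.ne'
  have hs := wLen_sq (p := 0) (σ := σ) (s := s)
  simpa [hw0, hσ, eq_comm (a := (0 : ℝ))] using hs

end IsParameter

namespace IsParametrized

variable {p σ c s k : ℝ} {q : ℂ × ℂ}

lemma of_σ_eq_zero (h : IsParametrized p 0 c s k q) : IsParametrized p 0 1 0 k q := by
  obtain rfl : k = 0 := by simpa [kSq] using h.k_sq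
  exact ⟨⟨h.p_nonneg, h.σ_nonneg, h.p_sq_add_σ_sq, by simp, by simp [kSq]⟩,
    by simpa [fstCube, cubedRadius, wLen] using h.fst_cubed, by simpa [sndCube] using h.snd_cubed⟩

lemma exists_joinedIn_of_ne_zero (h : IsParametrized p σ c s k q) (hp : p ≠ 0) (hσ : σ ≠ 0) :
    ∃ c' k' q', IsParametrized p σ c' 0 k' q' ∧ JoinedIn fermatDiscriminantLocus q q' := by
  obtain ⟨c', k', hc', hk', rfl, rfl, hparam⟩ := h.exists_deformation
  have hs' : Continuous fun t ↦ s * Real.cos t := by fun_prop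
  obtain ⟨f₁, hf₁, hf₁0, hf₁_cubed⟩ := exists_continuous_pow_eq
    (continuous_fstCube continuous_const continuous_const hs' hc' hk')
    (fun t ↦ (hparam t).fstCube_ne_zero hp) three_ne_zero (x₀ := 0) (z := q.1)
    (by simpa using h.fst_cubed)
  obtain ⟨f₂, hf₂, hf₂0, hf₂_cubed⟩ := exists_continuous_pow_eq
    (continuous_sndCube continuous_const continuous_const hs' hc' hk')
    (fun t ↦ (hparam t).sndCube_ne_zero hσ) three_ne_zero (x₀ := 0) (z := q.2)
    (by simpa using h.snd_cubed)
  have hlift (t : ℝ) : IsParametrized p σ (c' t) (s * Real.cos t) (k' t) (f₁ t, f₂ t) :=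
    ⟨hparam t, hf₁_cubed t, hf₂_cubed t⟩
  refine ⟨c' (Real.pi / 2), k' (Real.pi / 2), (f₁ (Real.pi / 2), f₂ (Real.pi / 2)),
    by simpa using hlift (Real.pi / 2), ?_⟩
  have hjoined := (isPathConnected_range (hf₁.prodMk hf₂)).joinedIn _ (Set.mem_range_self 0) _
    (Set.mem_range_self (Real.pi / 2))
  rw [hf₁0, hf₂0] at hjoined
  exact hjoined.mono (Set.range_subset_iff.2 fun t ↦ (hlift t).mem)

theorem exists_joinedIn (h : IsParametrized p σ c s k q) :
    ∃ c' k' q', IsParametrized p σ c' 0 k' q' ∧ JoinedIn fermatDiscriminantLocus q q' := by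
  rcases eq_or_ne p 0 with rfl | hp
  · obtain rfl := h.s_eq_zero
    exact ⟨c, k, q, h, .refl h.mem⟩
  rcases eq_or_ne σ 0 with rfl | hσ
  · exact ⟨1, k, q, h.of_σ_eq_zero, .refl h.mem⟩
  exact h.exists_joinedIn_of_ne_zero hp hσ

end IsParametrized

section Arc

/-- The value of `|q|` along an arc, at `s = 0` and `k = ε √(kSq p √(1 - p²) 0)`. -/
noncomputable def arcRadius (c ε p : ℝ) : ℝ :=
  radius p √(1 - p ^ 2) c 0 (ε * √(kSq p √(1 - p ^ 2) 0))

/-- For `ω³ = 1`, `ζ³ = c = ±1` and `ε = ±1`, the arc `0 ≤ p ≤ 1` in the part `s = 0` of the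
discriminant locus, running from `(0, ζ)` to `(-ω, 0)`. -/
noncomputable def arc (ω ζ : ℂ) (c ε p : ℝ) : ℂ × ℂ :=
  (ω * -(arcRadius c ε p * p : ℝ), ζ * (arcRadius c ε p * √(1 - p ^ 2) : ℝ))

variable {ω ζ : ℂ} {c ε p : ℝ}

lemma isParameter_arc (hc : c ^ 2 = 1) (hε : ε ^ 2 = 1) (hp : p ∈ Set.Icc 0 1) :
    IsParameter p √(1 - p ^ 2) c 0 (ε * √(kSq p √(1 - p ^ 2) 0)) where
  p_nonneg := hp.1
  σ_nonneg := Real.sqrt_nonneg _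
  p_sq_add_σ_sq := by
    rw [Real.sq_sqrt (sub_nonneg.2 (pow_le_one₀ hp.1 hp.2)), add_sub_cancel]
  c_sq_add_s_sq := by rw [hc, zero_pow two_ne_zero, add_zero]
  k_sq := by rw [mul_pow, hε, Real.sq_sqrt (kSq_zero_nonneg hp.1 hp.2), one_mul]

lemma arcRadius_pow_three (hc : c ^ 2 = 1) (hε : ε ^ 2 = 1) (hp : p ∈ Set.Icc 0 1) :
    arcRadius c ε p ^ 3 = cubedRadius p √(1 - p ^ 2) c 0 (ε * √(kSq p √(1 - p ^ 2) 0)) :=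
  (isParameter_arc hc hε hp).radius_pow_three

lemma fstCube_zero {σ k : ℝ} (hp : 0 ≤ p) :
    fstCube p σ c 0 k = -(cubedRadius p σ c 0 k * p ^ 3 : ℝ) := by
  simp [fstCube, wLen_zero hp]

lemma sndCube_zero {σ k : ℝ} : sndCube p σ c 0 k = c * (cubedRadius p σ c 0 k * σ ^ 3 : ℝ) := by
  simp only [sndCube]
  push_cast
  ring

lemma isParametrized_arc (hω : ω ^ 3 = 1) (hζ : ζ ^ 3 = c) (hc : c ^ 2 = 1) (hε : ε ^ 2 = 1)
    (hp : p ∈ Set.Icc 0 1) :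
    IsParametrized p √(1 - p ^ 2) c 0 (ε * √(kSq p √(1 - p ^ 2) 0)) (arc ω ζ c ε p) where
  toIsParameter := isParameter_arc hc hε hp
  fst_cubed := by
    rw [fstCube_zero hp.1, ← arcRadius_pow_three hc hε hp, arc, mul_pow, hω]
    push_cast
    ring
  snd_cubed := by
    rw [sndCube_zero, ← arcRadius_pow_three hc hε hp, arc, mul_pow, hζ]
    push_cast
    ring

lemma arc_zero (hc : c ^ 2 = 1) : arc ω ζ c ε 0 = (0, ζ) := by
  simp [arc, arcRadius, radius, cubedRadius, kSq, rLen, wLen, hc]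

lemma arc_one : arc ω ζ c ε 1 = (-ω, 0) := by
  simp [arc, arcRadius, radius, cubedRadius, kSq, wLen]

lemma continuous_arc : Continuous (arc ω ζ c ε) := by
  have hσ : Continuous fun p : ℝ ↦ √(1 - p ^ 2) := by fun_prop
  have hk := continuous_kSq continuous_id hσ continuous_const (s := fun _ ↦ 0)
  have hν := continuous_cubedRadius continuous_id hσ continuous_const (s := fun _ ↦ 0)
    (c := fun _ ↦ c) continuous_const (hk.sqrt.const_mul ε)
  have hρ : Continuous (arcRadius c ε) := hν.rpow_const fun _ ↦ .inr (by positivity)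
  unfold arc
  fun_prop

lemma joinedIn_arc (hω : ω ^ 3 = 1) (hζ : ζ ^ 3 = c) (hc : c ^ 2 = 1) (hε : ε ^ 2 = 1)
    {p' : ℝ} (hp : p ∈ Set.Icc 0 1) (hp' : p' ∈ Set.Icc 0 1) :
    JoinedIn fermatDiscriminantLocus (arc ω ζ c ε p) (arc ω ζ c ε p') := by
  refine ((convex_Icc (0 : ℝ) 1).isPathConnected ⟨p, hp⟩ |>.image continuous_arc).joinedIn
    _ (Set.mem_image_of_mem _ hp) _ (Set.mem_image_of_mem _ hp') |>.mono ?_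
  rintro _ ⟨t, ht, rfl⟩
  exact (isParametrized_arc hω hζ hc hε ht).mem

lemma IsParametrized.exists_eq_arc {σ k : ℝ} {q : ℂ × ℂ} (h : IsParametrized p σ c 0 k q) :
    ∃ ω ζ : ℂ, ∃ ε : ℝ, ω ^ 3 = 1 ∧ ζ ^ 3 = c ∧ ε ^ 2 = 1 ∧ q = arc ω ζ c ε p := by
  have hc : c ^ 2 = 1 := by simpa using h.c_sq_add_s_sq
  have hp : p ∈ Set.Icc 0 1 := ⟨h.p_nonneg, by nlinarith [h.p_sq_add_σ_sq, sq_nonneg σ]⟩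
  obtain rfl : σ = √(1 - p ^ 2) := by
    rw [← Real.sqrt_sq h.σ_nonneg, eq_sub_of_add_eq' h.p_sq_add_σ_sq]
  obtain ⟨ε, hε, rfl⟩ := exists_eq_mul_of_pow_eq_pow two_ne_zero
    (h.k_sq.trans (Real.sq_sqrt (kSq_zero_nonneg hp.1 hp.2)).symm)
  have hρ := arcRadius_pow_three hc hε hp
  obtain ⟨ω, hω, hfst⟩ := exists_eq_mul_of_pow_eq_pow three_ne_zero
    (x := q.1) (y := -(arcRadius c ε p * p : ℝ)) (by
      rw [h.fst_cubed, fstCube_zero hp.1, ← hρ]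
      push_cast
      ring)
  have hc3 : (c : ℂ) ^ 3 = c := by rw [pow_succ, ← ofReal_pow, hc, ofReal_one, one_mul]
  obtain ⟨η, hη, hsnd⟩ := exists_eq_mul_of_pow_eq_pow three_ne_zero
    (x := q.2) (y := c * (arcRadius c ε p * √(1 - p ^ 2) : ℝ)) (by
      rw [h.snd_cubed, sndCube_zero, ← hρ, mul_pow, hc3]
      push_cast
      ring)
  exact ⟨ω, η * c, ε, hω, by rw [mul_pow, hη, one_mul, hc3], hε,
    Prod.ext hfst (by rw [hsnd, ← mul_assoc]; rfl)⟩

end Arc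

lemma ne_zero_of_mem {q : ℂ × ℂ} (hq : q ∈ fermatDiscriminantLocus) : q ≠ 0 := by
  rintro rfl
  simp [mem_fermatDiscriminantLocus_iff] at hq

lemma IsParametrized.joinedIn_base {p c k σ : ℝ} {q : ℂ × ℂ} (h : IsParametrized p σ c 0 k q) :
    JoinedIn fermatDiscriminantLocus (-1, 0) q := by
  have hc : c ^ 2 = 1 := by simpa using h.c_sq_add_s_sq
  obtain ⟨ω, ζ, ε, hω, hζ, hε, rfl⟩ := h.exists_eq_arc
  have hp : p ∈ Set.Icc 0 1 := ⟨h.p_nonneg, by nlinarith [h.p_sq_add_σ_sq, sq_nonneg σ]⟩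
  have hbase := joinedIn_arc (one_pow 3) hζ hc hε (Set.right_mem_Icc.2 zero_le_one)
    (Set.left_mem_Icc.2 zero_le_one)
  have hq := joinedIn_arc hω hζ hc hε (Set.left_mem_Icc.2 zero_le_one) hp
  rw [arc_one, arc_zero hc] at hbase
  rw [arc_zero hc] at hq
  exact hbase.trans hq

theorem isPathConnected_fermatDiscriminantLocus : IsPathConnected fermatDiscriminantLocus := by
  have hbase ⦃q : ℂ × ℂ⦄ (hq : q ∈ fermatDiscriminantLocus) :
      JoinedIn fermatDiscriminantLocus (-1, 0) q := by
    obtain ⟨P⟩ := PolarForm.nonempty_of_ne_zero (ne_zero_of_mem hq)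
    obtain ⟨_, _, q', hq', hjoin⟩ := (P.isParametrized hq).exists_joinedIn
    exact hq'.joinedIn_base.trans hjoin.symm
  exact ⟨(-1, 0), by norm_num [mem_fermatDiscriminantLocus_iff], hbase⟩

end FermatTwistor

/-- The discriminant locus of the Fermat cubic is a compact connected subset of `ℝ⁴`. -/
theorem fermat_discriminant_locus_compact_connected :
    IsCompact fermatDiscriminantLocus ∧ IsConnected fermatDiscriminantLocus :=
  ⟨FermatTwistor.isCompact_fermatDiscriminantLocus,
    FermatTwistor.isPathConnected_fermatDiscriminantLocus.isConnected⟩
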